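/- Let γ_{n,i,j} be the number of σ ∈ Q_n with lap(σ) = i, dasc(σ) = j and dp(σ) = 0 (set to 0 when an index is negative). Then for all n ≥ 1 and all integers i, j ≥ 0, γ_{n+1,i,j} = i·γ_{n,i,j−1} + 2(j+1)·γ_{n,i−1,j+1} + (2n+3−2i−j)·γ_{n,i−1,j}, as an identity of integers, with initial conditions γ_{1,1,0} = 1 and γ_{1,i,j} = 0 for (i,j) ≠ (1,0). -/

import Mathlib

open Finset MvPolynomial

/-- Stirling permutations of order `n`, encoded as functions `Fin (2*n) → Fin (n+1)`
in one-line notation (position `i` holds the letter `σ (i) ∈ {1,…,n}`), such that each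
letter `1,…,n` occurs exactly twice and all entries between the two occurrences of a
letter are larger than that letter. -/
def StirlingSet (n : ℕ) : Finset (Fin (2*n) → Fin (n+1)) :=
  Finset.univ.filter (fun σ =>
    (∀ v : Fin (n+1), (v : ℕ) ≠ 0 →
        (Finset.univ.filter (fun i => σ i = v)).card = 2) ∧
    (∀ i j k : Fin (2*n), i < j → j < k → σ i = σ k → σ i < σ j))

/-- The letter at position `i ∈ {1,…,2n}` of a Stirling permutation, with the
convention that positions outside this range (in particular position `0`) hold `0`. -/
def sval {n : ℕ} (σ : Fin (2*n) → Fin (n+1)) (i : ℕ) : ℕ :=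
  if h : 1 ≤ i ∧ i ≤ 2*n then (σ ⟨i - 1, by omega⟩ : ℕ) else 0

/-- The number of ascent-plateaus: indices `2 ≤ i ≤ 2n-1` with `σ_{i-1} < σ_i = σ_{i+1}`. -/
def apQ {n : ℕ} (σ : Fin (2*n) → Fin (n+1)) : ℕ :=
  ((Finset.Icc 2 (2*n - 1)).filter
    (fun i => sval σ (i-1) < sval σ i ∧ sval σ i = sval σ (i+1))).card

/-- The number of left ascent-plateaus: indices `1 ≤ i ≤ 2n-1` with
`σ_{i-1} < σ_i = σ_{i+1}`, where `σ_0 = 0`. -/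
def lapQ {n : ℕ} (σ : Fin (2*n) → Fin (n+1)) : ℕ :=
  ((Finset.Icc 1 (2*n - 1)).filter
    (fun i => sval σ (i-1) < sval σ i ∧ sval σ i = sval σ (i+1))).card

/-- The number of double ascents: indices `1 ≤ i ≤ 2n-1` with
`σ_{i-1} < σ_i < σ_{i+1}`, where `σ_0 = 0`. -/
def dascQ {n : ℕ} (σ : Fin (2*n) → Fin (n+1)) : ℕ :=
  ((Finset.Icc 1 (2*n - 1)).filter
    (fun i => sval σ (i-1) < sval σ i ∧ sval σ i < sval σ (i+1))).card

/-- The number of descent-plateaus: indices `2 ≤ i ≤ 2n-1` with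
`σ_{i-1} > σ_i = σ_{i+1}`. -/
def dpQ {n : ℕ} (σ : Fin (2*n) → Fin (n+1)) : ℕ :=
  ((Finset.Icc 2 (2*n - 1)).filter
    (fun i => sval σ i < sval σ (i-1) ∧ sval σ i = sval σ (i+1))).card

/-- The number of ascents: indices `1 ≤ i ≤ 2n-1` with `σ_i < σ_{i+1}` or `i = 1`. -/
def ascQ {n : ℕ} (σ : Fin (2*n) → Fin (n+1)) : ℕ :=
  ((Finset.Icc 1 (2*n - 1)).filter
    (fun i => sval σ i < sval σ (i+1) ∨ i = 1)).card

/-- The number of plateaus: indices `1 ≤ i ≤ 2n-1` with `σ_i = σ_{i+1}`. -/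
def platQ {n : ℕ} (σ : Fin (2*n) → Fin (n+1)) : ℕ :=
  ((Finset.Icc 1 (2*n - 1)).filter (fun i => sval σ i = sval σ (i+1))).card

/-- The flag ascent-plateau number: `2·ap(σ)+1` if `σ_1 = σ_2`, and `2·ap(σ)` otherwise. -/
def fapQ {n : ℕ} (σ : Fin (2*n) → Fin (n+1)) : ℕ :=
  if 1 ≤ n ∧ sval σ 1 = sval σ 2 then 2 * apQ σ + 1 else 2 * apQ σ

/-- `γ_{n,i,j}`: the number of Stirling permutations of order `n` with `lap = i`,
`dasc = j` and `dp = 0`, extended by `0` when an index is negative. -/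
def gammaZ (n : ℕ) (i j : ℤ) : ℤ :=
  if 0 ≤ i ∧ 0 ≤ j then
    ((StirlingSet n).filter
      (fun σ => (lapQ σ : ℤ) = i ∧ (dascQ σ : ℤ) = j ∧ dpQ σ = 0)).card
  else 0

/-- `f : ℕ → ℕ` is a Stirling permutation of order `n`, written at the positions `1, …, 2n` and
extended by `0`. -/
structure IsStirlingWord (n : ℕ) (f : ℕ → ℕ) : Prop where
  pos_iff : ∀ t, 0 < f t ↔ 1 ≤ t ∧ t ≤ 2 * n
  le : ∀ t, f t ≤ n
  twice : ∀ v, 1 ≤ v → v ≤ n →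
    ∃ i j, i < j ∧ f i = v ∧ f j = v ∧ ∀ t, f t = v → t = i ∨ t = j
  lt_between : ∀ i j k, i < j → j < k → f i = f k → 0 < f i → f i < f j

lemma sval_succ {n : ℕ} (σ : Fin (2*n) → Fin (n+1)) (i : Fin (2*n)) :
    sval σ (i + 1) = σ i := by
  have := i.2
  simp [sval]

lemma sval_injective (n : ℕ) :
    Function.Injective (sval : (Fin (2*n) → Fin (n+1)) → ℕ → ℕ) := by
  intro σ τ h
  funext i
  have := congrFun h (i + 1)
  rw [sval_succ, sval_succ] at this
  exact Fin.ext this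

lemma ne_zero_of_card_fiber {n : ℕ} {σ : Fin (2*n) → Fin (n+1)}
    (h : ∀ v : Fin (n+1), (v : ℕ) ≠ 0 → (Finset.univ.filter (fun i => σ i = v)).card = 2)
    (i : Fin (2*n)) : σ i ≠ 0 := by
  have hc := Finset.card_eq_sum_card_fiberwise (f := σ) (s := Finset.univ) (t := Finset.univ)
    (fun _ _ => Finset.mem_coe.2 (Finset.mem_univ _))
  rw [Fin.sum_univ_succ, Finset.sum_congr rfl (fun v _ => h (Fin.succ v) (by simp))] at hc
  simp only [Finset.card_univ, Fintype.card_fin, Finset.sum_const, smul_eq_mul] at hc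
  have h0 : (Finset.univ.filter (fun i => σ i = 0)).card = 0 := by omega
  rw [Finset.card_eq_zero] at h0
  intro hi
  have : i ∈ Finset.univ.filter (fun i => σ i = 0) := by simp [hi]
  simp [h0] at this

lemma isStirlingWord_sval {n : ℕ} {σ : Fin (2*n) → Fin (n+1)} (h : σ ∈ StirlingSet n) :
    IsStirlingWord n (sval σ) := by
  simp only [StirlingSet, Finset.mem_filter, Finset.mem_univ, true_and] at h
  obtain ⟨h2, h3⟩ := h
  have h0 := ne_zero_of_card_fiber h2
  have hpos : ∀ t, 0 < sval σ t ↔ 1 ≤ t ∧ t ≤ 2 * n := by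
    intro t
    unfold sval
    split_ifs with ht
    · simp only [ht, and_self, iff_true]
      exact Nat.pos_of_ne_zero fun h => h0 _ (Fin.ext h)
    · simp [ht]
  have hex : ∀ t, 0 < sval σ t → ∃ i : Fin (2*n), t = i + 1 := by
    intro t ht
    rw [hpos] at ht
    exact ⟨⟨t - 1, by omega⟩, by simp; omega⟩
  refine ⟨hpos, ?_, ?_, ?_⟩
  · intro t
    unfold sval
    split_ifs
    · exact Nat.le_of_lt_succ (Fin.is_lt _)
    · exact Nat.zero_le _
  · intro v hv hvn
    obtain ⟨x, y, hxy, hs⟩ := Finset.card_eq_two.1 (h2 ⟨v, by omega⟩ (by simp; omega))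
    have hmem : ∀ i, (σ i : ℕ) = v ↔ i = x ∨ i = y := by
      intro i
      have := Finset.ext_iff.1 hs i
      simpa [Fin.ext_iff] using this
    have hall : ∀ t, sval σ t = v → t = x + 1 ∨ t = y + 1 := by
      intro t ht
      obtain ⟨i, rfl⟩ := hex t (by omega)
      rw [sval_succ, hmem] at ht
      rcases ht with rfl | rfl <;> simp
    have hx : sval σ (x + 1) = v := by rw [sval_succ, hmem]; simp
    have hy : sval σ (y + 1) = v := by rw [sval_succ, hmem]; simp
    rcases lt_or_gt_of_ne hxy with h | h
    · exact ⟨x + 1, y + 1, by simpa using h, hx, hy, hall⟩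
    · exact ⟨y + 1, x + 1, by simpa using h, hy, hx, fun t ht => (hall t ht).symm⟩
  · intro i j k hij hjk hik hi
    have hi' := (hpos i).1 hi
    have hk' := (hpos k).1 (hik ▸ hi)
    obtain ⟨i, rfl⟩ := hex i hi
    obtain ⟨j, rfl⟩ := hex j ((hpos j).2 (by omega))
    obtain ⟨k, rfl⟩ := hex k (hik ▸ hi)
    simp only [sval_succ] at hik ⊢
    exact h3 i j k (by simpa using hij) (by simpa using hjk) (Fin.ext hik)

lemma IsStirlingWord.exists_sval_eq {n : ℕ} {f : ℕ → ℕ} (h : IsStirlingWord n f) :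
    ∃ σ ∈ StirlingSet n, sval σ = f := by
  let σ : Fin (2*n) → Fin (n+1) := fun i => ⟨f (i + 1), Nat.lt_succ_of_le (h.le _)⟩
  have hσ : sval σ = f := by
    funext t
    unfold sval
    split_ifs with ht
    · simp only [σ]
      congr 1
      omega
    · have := h.pos_iff t
      omega
  have hv : ∀ i, (σ i : ℕ) = f (i + 1) := fun i => rfl
  refine ⟨σ, ?_, hσ⟩
  simp only [StirlingSet, Finset.mem_filter, Finset.mem_univ, true_and]
  constructor
  · intro v hv0
    obtain ⟨i, j, hij, hi, hj, hall⟩ := h.twice v (by omega) (by omega)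
    have hi' := (h.pos_iff i).1 (by omega)
    have hj' := (h.pos_iff j).1 (by omega)
    rw [Finset.card_eq_two]
    refine ⟨⟨i - 1, by omega⟩, ⟨j - 1, by omega⟩, by simp; omega, ?_⟩
    ext t
    simp only [Finset.mem_filter, Finset.mem_univ, true_and, Finset.mem_insert,
      Finset.mem_singleton, Fin.ext_iff, hv]
    constructor
    · intro ht
      have := hall _ ht
      omega
    · rintro (ht | ht)
      · rw [ht, ← hi]; congr 1; omega
      · rw [ht, ← hj]; congr 1; omega
  · intro i j k hij hjk hik
    have := h.lt_between (i + 1) (j + 1) (k + 1) (by simpa using hij) (by simpa using hjk)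
      (by simpa [Fin.ext_iff, hv] using hik) ((h.pos_iff _).2 (by omega))
    exact this

/-- The Stirling permutations of order `n` as a finite set of words `ℕ → ℕ`. -/
def stirlingWords (n : ℕ) : Finset (ℕ → ℕ) :=
  (StirlingSet n).map ⟨sval, sval_injective n⟩

lemma mem_stirlingWords {n : ℕ} {f : ℕ → ℕ} : f ∈ stirlingWords n ↔ IsStirlingWord n f := by
  simp only [stirlingWords, Finset.mem_map, Function.Embedding.coeFn_mk]
  constructor
  · rintro ⟨σ, hσ, rfl⟩
    exact isStirlingWord_sval hσ
  · exact fun h => h.exists_sval_eq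

/-- Insert two adjacent copies of the letter `N` right after position `p`. -/
def insertPair (p N : ℕ) (f : ℕ → ℕ) (i : ℕ) : ℕ :=
  if i ≤ p then f i else if i ≤ p + 2 then N else f (i - 2)

lemma isStirlingWord_insertPair {n p : ℕ} {f : ℕ → ℕ} (h : IsStirlingWord n f)
    (hp : p ≤ 2 * n) : IsStirlingWord (n + 1) (insertPair p (n + 1) f) := by
  obtain ⟨h1, h2, h3, h4⟩ := h
  refine ⟨?_, ?_, ?_, ?_⟩
  · intro t
    have := h1 t
    have := h1 (t - 2)
    unfold insertPair
    split_ifs <;> omega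
  · intro t
    have := h2 t
    have := h2 (t - 2)
    unfold insertPair
    split_ifs <;> omega
  · intro v hv hvn
    rcases Nat.lt_or_ge n v with hn | hn
    · refine ⟨p + 1, p + 2, by omega, ?_, ?_, ?_⟩
      · simp [insertPair]; omega
      · simp [insertPair]; omega
      · intro t ht
        have := h2 t
        have := h2 (t - 2)
        unfold insertPair at ht
        split_ifs at ht <;> omega
    · obtain ⟨i, j, hij, hi, hj, hall⟩ := h3 v hv hn
      clear h1 h2 h3 h4
      refine ⟨if i ≤ p then i else i + 2, if j ≤ p then j else j + 2, ?_, ?_, ?_, ?_⟩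
      · split_ifs <;> omega
      · unfold insertPair; grind
      · unfold insertPair; grind
      · intro t ht
        have := hall t
        have := hall (t - 2)
        unfold insertPair at ht
        split_ifs at ht <;> grind
  · intro i j k hij hjk hik hi
    have a1 := h4 i j k
    have a2 := h4 i j (k - 2)
    have a3 := h4 i (j - 2) (k - 2)
    have a4 := h4 (i - 2) (j - 2) (k - 2)
    have := h2 i
    have := h2 (i - 2)
    have := h2 k
    have := h2 (k - 2)
    unfold insertPair at hik hi ⊢
    split_ifs at hik hi ⊢ <;> omega

lemma IsStirlingWord.exists_insertPair {n : ℕ} {g : ℕ → ℕ} (h : IsStirlingWord (n + 1) g) :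
    ∃ f p, IsStirlingWord n f ∧ p ≤ 2 * n ∧ insertPair p (n + 1) f = g := by
  obtain ⟨h1, h2, h3, h4⟩ := h
  obtain ⟨i, j, hij, hi, hj, hall⟩ := h3 (n + 1) (by omega) le_rfl
  have hj1 : j = i + 1 := by
    by_contra hne
    have := h4 i (i + 1) j (by omega) (by omega) (by omega) (by omega)
    have := h2 (i + 1)
    omega
  subst hj1
  obtain ⟨p, rfl⟩ : ∃ p, i = p + 1 := ⟨i - 1, by have := h1 i; omega⟩
  have hp : p ≤ 2 * n := by have := h1 (p + 1 + 1); omega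
  refine ⟨fun t => if t ≤ p then g t else g (t + 2), p, ⟨?_, ?_, ?_, ?_⟩, hp, ?_⟩
  · intro t
    have := h1 t
    have := h1 (t + 2)
    split_ifs <;> omega
  · intro t
    have := h2 t
    have := h2 (t + 2)
    have := hall t
    have := hall (t + 2)
    split_ifs <;> omega
  · intro v hv hvn
    obtain ⟨a, b, hab, ha, hb, hall'⟩ := h3 v hv (by omega)
    have ha1 : a ≠ p + 1 := by rintro rfl; omega
    have ha2 : a ≠ p + 1 + 1 := by rintro rfl; omega
    have hb1 : b ≠ p + 1 := by rintro rfl; omega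
    have hb2 : b ≠ p + 1 + 1 := by rintro rfl; omega
    clear h1 h2 h3 h4
    refine ⟨if a ≤ p then a else a - 2, if b ≤ p then b else b - 2, ?_, ?_, ?_, ?_⟩
    · split_ifs <;> omega
    · grind
    · grind
    · intro t ht
      have := hall' t
      have := hall' (t + 2)
      split_ifs at ht <;> grind
  · intro a b c hab hbc hac ha
    have a1 := h4 a b c
    have a2 := h4 a b (c + 2)
    have a3 := h4 a (b + 2) (c + 2)
    have a4 := h4 (a + 2) (b + 2) (c + 2)
    split_ifs at hac ha ⊢ <;> omega
  · funext t
    have ht : t = p + 1 ∨ t = p + 1 + 1 → g t = n + 1 := by rintro (rfl | rfl) <;> assumption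
    clear h1 h2 h3 h4 hall
    unfold insertPair
    grind

lemma insertPair_inj {n p q : ℕ} {f g : ℕ → ℕ} (hf : ∀ t, f t ≤ n) (hg : ∀ t, g t ≤ n)
    (h : insertPair p (n + 1) f = insertPair q (n + 1) g) : f = g ∧ p = q := by
  have hpq : p = q := by
    have h1 := congrFun h (p + 1)
    have h2 := congrFun h (q + 1)
    have := hf (q + 1)
    have := hg (p + 1)
    have := hf (q + 1 - 2)
    have := hg (p + 1 - 2)
    unfold insertPair at h1 h2
    split_ifs at h1 h2 <;> omega
  subst hpq
  refine ⟨?_, rfl⟩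
  funext t
  have h1 := congrFun h t
  have h2 := congrFun h (t + 2)
  unfold insertPair at h1 h2
  grind

lemma sum_stirlingWords_succ (n : ℕ) (F : (ℕ → ℕ) → ℤ) :
    ∑ g ∈ stirlingWords (n + 1), F g =
      ∑ f ∈ stirlingWords n, ∑ p ∈ Finset.range (2 * n + 1), F (insertPair p (n + 1) f) := by
  rw [← Finset.sum_product']
  symm
  refine Finset.sum_bij (fun x _ => insertPair x.2 (n + 1) x.1) ?_ ?_ ?_ ?_
  · rintro ⟨f, p⟩ hx
    simp only [Finset.mem_product, mem_stirlingWords, Finset.mem_range] at hx ⊢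
    exact isStirlingWord_insertPair hx.1 (by omega)
  · rintro ⟨f, p⟩ hx ⟨g, q⟩ hy hxy
    simp only [Finset.mem_product, mem_stirlingWords] at hx hy
    obtain ⟨rfl, rfl⟩ := insertPair_inj hx.1.le hy.1.le hxy
    rfl
  · intro g hg
    obtain ⟨f, p, hf, hp, rfl⟩ := (mem_stirlingWords.1 hg).exists_insertPair
    refine ⟨(f, p), ?_, rfl⟩
    simp only [Finset.mem_product, mem_stirlingWords, Finset.mem_range]
    exact ⟨hf, by omega⟩
  · intro x _
    rfl

/-- Indicator of a left ascent-plateau of `f` at position `i`. -/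
def lapInd (f : ℕ → ℕ) (i : ℕ) : ℤ := if f (i - 1) < f i ∧ f i = f (i + 1) then 1 else 0

/-- Indicator of a double ascent of `f` at position `i`. -/
def dascInd (f : ℕ → ℕ) (i : ℕ) : ℤ := if f (i - 1) < f i ∧ f i < f (i + 1) then 1 else 0

/-- Indicator of a descent-plateau of `f` at position `i`, away from the zero padding. -/
def dpInd (f : ℕ → ℕ) (i : ℕ) : ℤ :=
  if 0 < f i ∧ f i < f (i - 1) ∧ f i = f (i + 1) then 1 else 0

lemma sum_range_insert {T T' : ℕ → ℤ} {p m : ℕ} (hp : p ≤ m) (h1 : ∀ i < p, T' i = T i)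
    (h2 : ∀ i, p + 2 ≤ i → T' (i + 2) = T i) :
    ∑ i ∈ Finset.range (m + 4), T' i =
      ∑ i ∈ Finset.range (m + 2), T i - T p - T (p + 1) +
        (T' p + T' (p + 1) + T' (p + 2) + T' (p + 3)) := by
  obtain ⟨r, rfl⟩ := Nat.exists_eq_add_of_le hp
  have e1 : p + r + 4 = p + 1 + 1 + 1 + 1 + r := by ring
  have e2 : p + r + 2 = p + 1 + 1 + r := by ring
  rw [e1, e2, Finset.sum_range_add, Finset.sum_range_add T]
  simp only [Finset.sum_range_succ]
  rw [Finset.sum_congr rfl (fun i hi => h1 i (Finset.mem_range.1 hi)),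
    Finset.sum_congr rfl (fun i _ => show T' (p + 1 + 1 + 1 + 1 + i) = T (p + 1 + 1 + i) by
      rw [← h2 _ (by omega)]; congr 1; ring)]
  ring

lemma IsStirlingWord.le_of_lt {n : ℕ} {f : ℕ → ℕ} (h : IsStirlingWord n f) (i : ℕ)
    (hi : f (i - 1) < f i) : f i ≤ f (i + 1) := by
  obtain ⟨a, b, hab, ha, hb, hall⟩ := h.twice (f i) (by omega) (h.le i)
  rcases hall i rfl with rfl | rfl
  · rcases Nat.lt_or_ge (i + 1) b with hlt | hge
    · exact (h.lt_between i (i + 1) b (by omega) hlt hb.symm (by omega)).le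
    · obtain rfl : b = i + 1 := by omega
      exact hb.ge
  · rcases Nat.lt_or_ge a (i - 1) with hlt | hge
    · have := h.lt_between a (i - 1) i hlt (by omega) ha (by omega)
      omega
    · obtain rfl : a = i - 1 := by omega
      omega

lemma IsStirlingWord.not_triple {n : ℕ} {f : ℕ → ℕ} (h : IsStirlingWord n f) (i : ℕ)
    (h0 : 0 < f i) : ¬ (f (i - 1) = f i ∧ f i = f (i + 1)) := by
  rintro ⟨h1, h2⟩
  obtain ⟨a, b, hab, ha, hb, hall⟩ := h.twice (f i) h0 (h.le i)
  have := h.pos_iff i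
  have := hall i rfl
  have := hall _ h1
  have := hall _ h2.symm
  omega

section statistics

variable (n : ℕ) (f : ℕ → ℕ)

/-- The number of left ascent-plateaus of a word of length `2n`. -/
def lapW : ℤ := ∑ i ∈ Finset.range (2 * n + 2), lapInd f i

/-- The number of double ascents of a word of length `2n`. -/
def dascW : ℤ := ∑ i ∈ Finset.range (2 * n + 2), dascInd f i

/-- The number of descent-plateaus of a word of length `2n`. -/
def dpW : ℤ := ∑ i ∈ Finset.range (2 * n + 2), dpInd f i

end statistics

lemma insertPair_of_le {p N i : ℕ} {f : ℕ → ℕ} (h : i ≤ p) : insertPair p N f i = f i := by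
  simp [insertPair, h]

lemma insertPair_add_two {p N i : ℕ} {f : ℕ → ℕ} (h : p < i) :
    insertPair p N f (i + 2) = f i := by
  unfold insertPair
  rw [if_neg (by omega), if_neg (by omega), Nat.add_sub_cancel]

lemma insertPair_add_one_self {p N : ℕ} {f : ℕ → ℕ} : insertPair p N f (p + 1) = N := by
  simp [insertPair]

lemma insertPair_add_two_self {p N : ℕ} {f : ℕ → ℕ} : insertPair p N f (p + 2) = N := by
  simp [insertPair]

lemma statW_insertPair {n p : ℕ} {f : ℕ → ℕ} (h : IsStirlingWord n f) (hp : p ≤ 2 * n) :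
    lapW (n + 1) (insertPair p (n + 1) f) = lapW n f + 1 - lapInd f p - lapInd f (p + 1) ∧
    dascW (n + 1) (insertPair p (n + 1) f) = dascW n f + lapInd f p - dascInd f (p + 1) ∧
    dpW (n + 1) (insertPair p (n + 1) f) = dpW n f - dpInd f p + lapInd f (p + 1) := by
  have e : 2 * (n + 1) + 2 = 2 * n + 4 := by ring
  have v0 : insertPair p (n + 1) f (p - 1) = f (p - 1) := insertPair_of_le (by omega)
  have v1 : insertPair p (n + 1) f p = f p := insertPair_of_le le_rfl
  have v2 : insertPair p (n + 1) f (p + 1) = n + 1 := insertPair_add_one_self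
  have v3 : insertPair p (n + 1) f (p + 2) = n + 1 := insertPair_add_two_self
  have v4 : insertPair p (n + 1) f (p + 3) = f (p + 1) := insertPair_add_two (by omega)
  have v5 : insertPair p (n + 1) f (p + 4) = f (p + 2) := insertPair_add_two (by omega)
  have lo : ∀ i < p, insertPair p (n + 1) f (i - 1) = f (i - 1) ∧
      insertPair p (n + 1) f i = f i ∧ insertPair p (n + 1) f (i + 1) = f (i + 1) :=
    fun i hi => ⟨insertPair_of_le (by omega), insertPair_of_le (by omega),
      insertPair_of_le (by omega)⟩
  have hi : ∀ i, p + 2 ≤ i → insertPair p (n + 1) f (i + 2 - 1) = f (i - 1) ∧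
      insertPair p (n + 1) f (i + 2) = f i ∧
      insertPair p (n + 1) f (i + 2 + 1) = f (i + 1) := by
    intro i hi
    refine ⟨?_, insertPair_add_two (by omega), ?_⟩
    · rw [show i + 2 - 1 = i - 1 + 2 by omega]
      exact insertPair_add_two (by omega)
    · exact insertPair_add_two (i := i + 1) (by omega)
  have m1 := h.le_of_lt p
  have m2 := h.le_of_lt (p + 1)
  have m3 := h.not_triple p
  have m4 := h.not_triple (p + 1)
  have l0 := h.le (p - 1)
  have l1 := h.le p
  have l2 := h.le (p + 1)
  have l3 := h.le (p + 2)
  have z : f p = 0 → f (p - 1) = 0 := by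
    intro h0
    have := h.pos_iff p
    have := h.pos_iff (p - 1)
    omega
  simp only [Nat.add_sub_cancel] at m2 m4
  refine ⟨?_, ?_, ?_⟩
  · unfold lapW
    rw [e, sum_range_insert (T := lapInd f) hp (fun i h => by simp [lapInd, lo i h])
      (fun i h => by simp only [lapInd, hi i h])]
    simp only [lapInd, v0, v1, v2, v3, v4, v5, Nat.add_sub_cancel,
      show p + 2 - 1 = p + 1 by omega, show p + 3 - 1 = p + 2 by omega, Nat.add_assoc,
      Nat.reduceAdd]
    grind
  · unfold dascW
    rw [e, sum_range_insert (T := dascInd f) hp (fun i h => by simp [dascInd, lo i h])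
      (fun i h => by simp only [dascInd, hi i h])]
    simp only [dascInd, lapInd, v0, v1, v2, v3, v4, v5, Nat.add_sub_cancel,
      show p + 2 - 1 = p + 1 by omega, show p + 3 - 1 = p + 2 by omega, Nat.add_assoc,
      Nat.reduceAdd]
    grind
  · unfold dpW
    rw [e, sum_range_insert (T := dpInd f) hp (fun i h => by simp [dpInd, lo i h])
      (fun i h => by simp only [dpInd, hi i h])]
    simp only [dpInd, lapInd, v0, v1, v2, v3, v4, v5, Nat.add_sub_cancel,
      show p + 2 - 1 = p + 1 by omega, show p + 3 - 1 = p + 2 by omega, Nat.add_assoc,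
      Nat.reduceAdd]
    grind

/-- The number of Stirling permutations of order `n` with prescribed numbers of left
ascent-plateaus, double ascents and descent-plateaus. -/
def stirlingCount (n : ℕ) (i j k : ℤ) : ℤ :=
  ∑ f ∈ stirlingWords n, if lapW n f = i ∧ dascW n f = j ∧ dpW n f = k then 1 else 0

lemma sum_range_ind {n : ℕ} {f : ℕ → ℕ} (h : IsStirlingWord n f) :
    (∑ p ∈ Finset.range (2 * n + 1), lapInd f p = lapW n f ∧
      ∑ p ∈ Finset.range (2 * n + 1), dpInd f p = dpW n f) ∧
    ∑ p ∈ Finset.range (2 * n + 1), lapInd f (p + 1) = lapW n f ∧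
      ∑ p ∈ Finset.range (2 * n + 1), dascInd f (p + 1) = dascW n f := by
  have h1 := h.pos_iff (2 * n + 1)
  have h0 : f (2 * n + 1) = 0 := by omega
  refine ⟨⟨?_, ?_⟩, ?_, ?_⟩
  · rw [lapW, Finset.sum_range_succ _ (2 * n + 1)]
    simp [lapInd, h0]
  · rw [dpW, Finset.sum_range_succ _ (2 * n + 1)]
    simp [dpInd, h0]
  · rw [lapW, Finset.sum_range_succ' _ (2 * n + 1)]
    simp [lapInd]
  · rw [dascW, Finset.sum_range_succ' _ (2 * n + 1)]
    simp [dascInd]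

lemma ite_insertPair {n p : ℕ} {f : ℕ → ℕ} (h : IsStirlingWord n f) (hp : p ≤ 2 * n)
    (i j k : ℤ) :
    (if lapW (n + 1) (insertPair p (n + 1) f) = i ∧ dascW (n + 1) (insertPair p (n + 1) f) = j ∧
        dpW (n + 1) (insertPair p (n + 1) f) = k then (1 : ℤ) else 0) =
      lapInd f (p + 1) * (if lapW n f = i ∧ dascW n f = j ∧ dpW n f = k - 1 then 1 else 0) +
      dascInd f (p + 1) *
        (if lapW n f = i - 1 ∧ dascW n f = j + 1 ∧ dpW n f = k then 1 else 0) +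
      lapInd f p * (if lapW n f = i ∧ dascW n f = j - 1 ∧ dpW n f = k then 1 else 0) +
      dpInd f p * (if lapW n f = i - 1 ∧ dascW n f = j ∧ dpW n f = k + 1 then 1 else 0) +
      (1 - lapInd f (p + 1) - dascInd f (p + 1) - lapInd f p - dpInd f p) *
        (if lapW n f = i - 1 ∧ dascW n f = j ∧ dpW n f = k then 1 else 0) := by
  obtain ⟨e1, e2, e3⟩ := statW_insertPair h hp
  rw [e1, e2, e3]
  have hc : (lapInd f (p + 1) = 1 ∧ dascInd f (p + 1) = 0 ∧ lapInd f p = 0 ∧ dpInd f p = 0) ∨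
      (lapInd f (p + 1) = 0 ∧ dascInd f (p + 1) = 1 ∧ lapInd f p = 0 ∧ dpInd f p = 0) ∨
      (lapInd f (p + 1) = 0 ∧ dascInd f (p + 1) = 0 ∧ lapInd f p = 1 ∧ dpInd f p = 0) ∨
      (lapInd f (p + 1) = 0 ∧ dascInd f (p + 1) = 0 ∧ lapInd f p = 0 ∧ dpInd f p = 1) ∨
      (lapInd f (p + 1) = 0 ∧ dascInd f (p + 1) = 0 ∧ lapInd f p = 0 ∧ dpInd f p = 0) := by
    simp only [lapInd, dascInd, dpInd, Nat.add_sub_cancel]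
    split_ifs <;> omega
  rcases hc with ⟨c1, c2, c3, c4⟩ | ⟨c1, c2, c3, c4⟩ | ⟨c1, c2, c3, c4⟩ | ⟨c1, c2, c3, c4⟩ |
      ⟨c1, c2, c3, c4⟩ <;>
    · simp only [c1, c2, c3, c4, one_mul, zero_mul, zero_add, add_zero, sub_zero, sub_self]
      refine if_congr ?_ rfl rfl
      constructor <;> intro hx <;> omega

theorem stirlingCount_succ (n : ℕ) (i j k : ℤ) :
    stirlingCount (n + 1) i j k =
      i * stirlingCount n i j (k - 1) + (j + 1) * stirlingCount n (i - 1) (j + 1) k +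
        i * stirlingCount n i (j - 1) k + (k + 1) * stirlingCount n (i - 1) j (k + 1) +
        (2 * (n : ℤ) + 3 - 2 * i - j - k) * stirlingCount n (i - 1) j k := by
  unfold stirlingCount
  rw [sum_stirlingWords_succ]
  simp only [Finset.mul_sum, ← Finset.sum_add_distrib]
  refine Finset.sum_congr rfl fun f hf => ?_
  rw [mem_stirlingWords] at hf
  rw [Finset.sum_congr rfl fun p hp =>
    ite_insertPair hf (Nat.le_of_lt_succ (Finset.mem_range.1 hp)) i j k]
  obtain ⟨⟨s1, s2⟩, s3, s4⟩ := sum_range_ind hf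
  simp only [Finset.sum_add_distrib, ← Finset.sum_mul, Finset.sum_sub_distrib, s1, s2, s3, s4,
    Finset.sum_const, Finset.card_range, nsmul_eq_mul, mul_one]
  have key : ∀ (P : Prop) [Decidable P] (a b : ℤ), (P → a = b) →
      a * (if P then 1 else 0) = b * (if P then 1 else 0) := by
    intro P _ a b hab
    split_ifs with hP
    · rw [hab hP]
    · simp
  congr 1
  · congr 1
    · congr 1
      · congr 1 <;> exact key _ _ _ fun h => by omega
      · exact key _ _ _ fun h => by omega
    · exact key _ _ _ fun h => by omega
  · exact key _ _ _ fun h => by push_cast; omega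

lemma stirlingCount_zero (i j k : ℤ) :
    stirlingCount 0 i j k = if i = 0 ∧ j = 0 ∧ k = 0 then 1 else 0 := by
  have h : stirlingWords 0 = {fun _ => 0} := by
    ext f
    rw [mem_stirlingWords, Finset.mem_singleton]
    constructor
    · intro h
      funext t
      have := h.le t
      omega
    · rintro rfl
      exact ⟨fun t => by omega, fun t => le_rfl, fun v hv hv' => by omega,
        fun a b c _ _ _ h => absurd h (lt_irrefl 0)⟩
  simp only [stirlingCount, h, Finset.sum_singleton]
  refine if_congr ?_ rfl rfl
  simp [lapW, dascW, dpW, lapInd, dascInd, dpInd, eq_comm]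

lemma stirlingCount_of_neg {n : ℕ} {i j k : ℤ} (hk : k < 0) : stirlingCount n i j k = 0 := by
  refine Finset.sum_eq_zero fun f _ => if_neg ?_
  have : 0 ≤ dpW n f := Finset.sum_nonneg fun i _ => by unfold dpInd; split_ifs <;> simp
  omega

/-- Double ascents and descent-plateaus are exchangeable. -/
theorem stirlingCount_exchange (n : ℕ) (i j k : ℤ) :
    (k + 1) * stirlingCount n i j (k + 1) = (j + 1) * stirlingCount n i (j + 1) k := by
  induction n generalizing i j k with
  | zero =>
    simp only [stirlingCount_zero]
    split_ifs <;> grind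
  | succ n ih =>
    rw [stirlingCount_succ, stirlingCount_succ]
    have a1 := ih i (j - 1) k
    have a2 := ih i j (k - 1)
    have a3 := ih (i - 1) j (k + 1)
    have a4 := ih (i - 1) (j + 1) k
    have a5 := ih (i - 1) j k
    simp only [sub_add_cancel, add_sub_cancel_right] at *
    linear_combination i * a1 + i * a2 + (k + 1) * a3 + (j + 1) * a4 +
      (2 * (n : ℤ) + 3 - 2 * i - j - k - 1) * a5

lemma card_filter_eq_sum {n : ℕ} {a : ℕ} {P : ℕ → Prop} [DecidablePred P]
    (ha : ∀ i < 2 * n + 2, P i → a ≤ i ∧ i ≤ 2 * n - 1) :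
    (((Finset.Icc a (2 * n - 1)).filter P).card : ℤ) =
      ∑ i ∈ Finset.range (2 * n + 2), if P i then 1 else 0 := by
  rw [Finset.sum_boole]
  congr 2
  ext i
  simp only [Finset.mem_filter, Finset.mem_Icc, Finset.mem_range]
  constructor
  · rintro ⟨h, hP⟩
    exact ⟨by omega, hP⟩
  · rintro ⟨h, hP⟩
    exact ⟨ha i h hP, hP⟩

lemma statQ_eq_statW {n : ℕ} {σ : Fin (2*n) → Fin (n+1)} (hσ : σ ∈ StirlingSet n) :
    (lapQ σ : ℤ) = lapW n (sval σ) ∧ (dascQ σ : ℤ) = dascW n (sval σ) ∧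
      (dpQ σ : ℤ) = dpW n (sval σ) := by
  have h := (isStirlingWord_sval hσ).pos_iff
  have hb : ∀ i, 0 < sval σ i → sval σ i ≤ sval σ (i + 1) → 1 ≤ i ∧ i ≤ 2 * n - 1 := by
    intro i h1 h2
    have := h i
    have := h (i + 1)
    omega
  refine ⟨?_, ?_, ?_⟩
  · exact card_filter_eq_sum fun i _ hP => hb i (by omega) (by omega)
  · exact card_filter_eq_sum fun i _ hP => hb i (by omega) (by omega)
  · have : dpQ σ = ((Finset.Icc 2 (2*n - 1)).filter (fun i => 0 < sval σ i ∧
        sval σ i < sval σ (i-1) ∧ sval σ i = sval σ (i+1))).card := by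
      unfold dpQ
      congr 1
      refine Finset.filter_congr fun i hi => ?_
      have := h i
      rw [Finset.mem_Icc] at hi
      omega
    rw [this]
    refine card_filter_eq_sum fun i _ hP => ?_
    have := hb i (by omega) (by omega)
    have := h (i - 1)
    omega

lemma gammaZ_eq_stirlingCount (n : ℕ) (i j : ℤ) : gammaZ n i j = stirlingCount n i j 0 := by
  have h : stirlingCount n i j 0 = (((StirlingSet n).filter
      (fun σ => (lapQ σ : ℤ) = i ∧ (dascQ σ : ℤ) = j ∧ dpQ σ = 0)).card : ℤ) := by
    rw [stirlingCount, stirlingWords, Finset.sum_map,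
      Finset.card_filter]
    push_cast
    refine Finset.sum_congr rfl fun σ hσ => ?_
    obtain ⟨h1, h2, h3⟩ := statQ_eq_statW hσ
    rw [Function.Embedding.coeFn_mk, ← h1, ← h2, ← h3]
    simp
  rw [h, gammaZ]
  split_ifs with hij
  · rfl
  · symm
    rw [Nat.cast_eq_zero, Finset.card_eq_zero, Finset.filter_eq_empty_iff]
    intro σ _ hσ
    omega

theorem statement_17 :
    (∀ n : ℕ, 1 ≤ n → ∀ i j : ℤ, 0 ≤ i → 0 ≤ j →
        gammaZ (n + 1) i j =
          i * gammaZ n i (j - 1) + 2 * (j + 1) * gammaZ n (i - 1) (j + 1) +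
            (2 * (n : ℤ) + 3 - 2 * i - j) * gammaZ n (i - 1) j) ∧
    gammaZ 1 1 0 = 1 ∧ ∀ i j : ℤ, (i, j) ≠ (1, 0) → gammaZ 1 i j = 0 := by
  refine ⟨fun n _ i j _ _ => ?_, ?_, fun i j hij => ?_⟩
  · simp only [gammaZ_eq_stirlingCount]
    have h1 := stirlingCount_succ n i j 0
    have h2 := stirlingCount_exchange n (i - 1) j 0
    have h3 : stirlingCount n i j (0 - 1) = 0 := stirlingCount_of_neg (by norm_num)
    rw [h3] at h1
    linear_combination h1 + h2
  · rw [gammaZ_eq_stirlingCount, stirlingCount_succ]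
    simp [stirlingCount_zero]
  · rw [gammaZ_eq_stirlingCount, stirlingCount_succ]
    simp only [stirlingCount_zero]
    grind
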